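/- The constant function v ≡ −log|V| is the unique solution v : V → ℝ of the equation Lv(x) = −e^{v(x)} + 1/|V| for all x ∈ V. -/

import Mathlib

open Real Finset

variable {V : Type*}

/-- Discrete integral: `∫_V f dμ = Σ_x μ(x) f(x)`. -/
noncomputable def intV [Fintype V] (μ f : V → ℝ) : ℝ := ∑ x, μ x * f x

/-- Volume `|V| = Σ_x μ(x)`. -/
noncomputable def volV [Fintype V] (μ : V → ℝ) : ℝ := ∑ x, μ x

/-- The nonlocal (fractional graph Laplacian type) operator
`Lu(x) = (1/μ(x)) Σ_{y ≠ x} W(x,y)(u(x) − u(y))`. -/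
noncomputable def opL [Fintype V] [DecidableEq V] (μ : V → ℝ) (W : V → V → ℝ)
    (u : V → ℝ) (x : V) : ℝ :=
  (1 / μ x) * ∑ y ∈ univ.filter (fun y => y ≠ x), W x y * (u x - u y)

/-- Gradient form `∇u·∇v(x) = (1/(2μ(x))) Σ_{y ≠ x} W(x,y)(u(x)−u(y))(v(x)−v(y))`. -/
noncomputable def gradForm [Fintype V] [DecidableEq V] (μ : V → ℝ) (W : V → V → ℝ)
    (u v : V → ℝ) (x : V) : ℝ :=
  (1 / (2 * μ x)) * ∑ y ∈ univ.filter (fun y => y ≠ x), W x y * (u x - u y) * (v x - v y)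

/-- `|∇u|²(x) = ∇u·∇u(x)`. -/
noncomputable def gradSq [Fintype V] [DecidableEq V] (μ : V → ℝ) (W : V → V → ℝ)
    (u : V → ℝ) (x : V) : ℝ := gradForm μ W u u x

/-!
At a maximum point of `u - w` the differences `u x - u y` dominate `w x - w y`, so `L w ≤ L u`
there. If moreover `L u + f(u) ≤ L w + f(w)` with `f` strictly increasing, then `u ≤ w` at that
point, hence everywhere. Uniqueness follows by comparing a solution, in both directions, with the
constant `c = -log |V|`, for which `L c = 0` and `e^c = 1/|V|`.
-/

section ComparisonPrinciple

variable [Fintype V] [DecidableEq V] {μ : V → ℝ} {W : V → V → ℝ}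

theorem opL_const (c : ℝ) (x : V) : opL μ W (fun _ => c) x = 0 := by
  simp only [opL, sub_self, mul_zero, sum_const_zero]

theorem opL_le_opL_of_forall_sub_le {u w : V → ℝ} {x : V} (hμ : 0 < μ x)
    (hW : ∀ y, y ≠ x → 0 ≤ W x y) (hmax : ∀ y, u y - w y ≤ u x - w x) :
    opL μ W w x ≤ opL μ W u x := by
  refine mul_le_mul_of_nonneg_left (sum_le_sum fun y hy => ?_) (one_div_nonneg.mpr hμ.le)
  have hdiff : w x - w y ≤ u x - u y := by linarith [hmax y]
  exact mul_le_mul_of_nonneg_left hdiff (hW y (mem_filter.mp hy).2)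

theorem le_of_opL_add_le_opL_add {f : V → ℝ → ℝ} {u w : V → ℝ} (hμ : ∀ x, 0 < μ x)
    (hW : ∀ x y, x ≠ y → 0 ≤ W x y) (hf : ∀ x, StrictMono (f x))
    (h : ∀ x, opL μ W u x + f x (u x) ≤ opL μ W w x + f x (w x)) : u ≤ w := by
  intro x
  have : Nonempty V := ⟨x⟩
  obtain ⟨a, hmax⟩ := Finite.exists_max fun y => u y - w y
  have hL : opL μ W w a ≤ opL μ W u a :=
    opL_le_opL_of_forall_sub_le (hμ a) (fun y hy => hW a y hy.symm) hmax
  have ha : u a ≤ w a := (hf a).le_iff_le.mp (by linarith [h a])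
  linarith [hmax x]

theorem unique_solution_neg_case_general {f : V → ℝ → ℝ} (hμ : ∀ x, 0 < μ x)
    (hW : ∀ x y, x ≠ y → 0 ≤ W x y) (hf : ∀ x, StrictMono (f x)) (c : ℝ) (v : V → ℝ) :
    (∀ x, opL μ W v x = -f x (v x) + f x c) ↔ ∀ x, v x = c := by
  constructor
  · intro h
    have heq : ∀ x, opL μ W v x + f x (v x) = opL μ W (fun _ => c) x + f x c := fun x => by
      rw [h x, opL_const]
      ring
    have hle : v ≤ fun _ => c := le_of_opL_add_le_opL_add hμ hW hf fun x => (heq x).le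
    have hge : (fun _ => c) ≤ v := le_of_opL_add_le_opL_add hμ hW hf fun x => (heq x).ge
    exact fun x => le_antisymm (hle x) (hge x)
  · intro h x
    obtain rfl : v = fun _ => c := funext h
    rw [opL_const, neg_add_cancel]

end ComparisonPrinciple

theorem volV_pos [Fintype V] [Nonempty V] {μ : V → ℝ} (hμ : ∀ x, 0 < μ x) : 0 < volV μ :=
  sum_pos (fun x _ => hμ x) univ_nonempty

theorem exp_neg_log_volV [Fintype V] [Nonempty V] {μ : V → ℝ} (hμ : ∀ x, 0 < μ x) :
    exp (-log (volV μ)) = 1 / volV μ := by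
  rw [exp_neg, exp_log (volV_pos hμ), one_div]

/-- The constant function `−log|V|` is the unique solution of `Lv = −e^v + 1/|V|`. -/
theorem unique_solution_neg_case [Fintype V] [Nonempty V] [DecidableEq V]
    (μ : V → ℝ) (W : V → V → ℝ)
    (hμ : ∀ x, 0 < μ x)
    (hWsym : ∀ x y, W x y = W y x)
    (hWpos : ∀ x y, x ≠ y → 0 < W x y) :
    ∀ v : V → ℝ,
      (∀ x, opL μ W v x = -Real.exp (v x) + 1 / volV μ) ↔
      (∀ x, v x = -Real.log (volV μ)) := by
  simpa only [exp_neg_log_volV hμ] using unique_solution_neg_case_general (f := fun _ => exp) hμ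
    (fun x y hxy => (hWpos x y hxy).le) (fun _ => exp_strictMono) (-log (volV μ))
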